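/- (Sphere-packing converse for the q-ary symmetric channel) Let q ≥ 2, n ≥ 1, M ≥ 1, and 0 ≤ ε ≤ 1/q. Consider the q-ary symmetric channel on alphabet Fin q with per-letter transition probability W(y|x) = 1 − (q−1)ε if y = x and W(y|x) = ε otherwise, used memorylessly n times. Let A_t := q^n/M − Σ_{j=0}^{t−1} C(n,j)·(q−1)^j for t ∈ {0, 1, …, n}, and let t* be the largest t ∈ {0, 1, …, n} with A_t ≥ 0. Then for every code x_1, …, x_M ∈ (Fin q)^n and every decoder g : (Fin q)^n → {1, …, M}, the average success probability satisfies (1/M)·Σ_{m=1}^{M} Σ_{y : g(y)=m} ε^{d(y, x_m)}·(1−(q−1)ε)^{n−d(y, x_m)} ≤ Σ_{j=0}^{t*−1} C(n,j)·(q−1)^j·ε^j·(1−(q−1)ε)^{n−j} + A_{t*}·ε^{t*}·(1−(q−1)ε)^{n−t*}, where d(·,·) denotes Hamming distance. -/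

import Mathlib

/-!
The likelihood of `y` given `x` is `c (d(y, x))` with `c j = ε ^ j * (1 - (q - 1) ε) ^ (n - j)`
decreasing in `j`, so subtracting the threshold `c t` leaves a positive part supported on the ball
`d(y, x) < t`. The likelihood collected by a decoding region `D` is therefore at most
`∑ y, (c (d(y, x)) - c t)⁺ + |D| c t`, whose first term depends neither on `D` nor on `x`. The
regions partition the `q ^ n` words, so adding these bounds over all messages replaces `|D|` by
`q ^ n`.
-/

open Finset

section HammingSphere

variable {ι α : Type*} [Fintype ι] [DecidableEq ι] [Fintype α] [DecidableEq α]

theorem card_filter_filter_ne_eq (x : ι → α) (S : Finset ι) :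
    #{y : ι → α | ({i | y i ≠ x i} : Finset ι) = S} = (Fintype.card α - 1) ^ #S := by
  have filter_eq_piFinset : ({y : ι → α | ({i | y i ≠ x i} : Finset ι) = S} : Finset (ι → α))
      = Fintype.piFinset fun i => if i ∈ S then {x i}ᶜ else {x i} := by
    ext y
    simp only [mem_filter_univ, Fintype.mem_piFinset, Finset.ext_iff]
    refine forall_congr' fun i => ?_
    by_cases hi : i ∈ S <;> simp [hi]
  rw [filter_eq_piFinset, Fintype.card_piFinset]
  simp [apply_ite card, card_compl]

theorem sum_apply_hammingDist {G : Type*} [AddCommMonoid G] (x : ι → α) (f : ℕ → G) :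
    ∑ y, f (hammingDist y x) = ∑ j ∈ range (Fintype.card ι + 1),
      ((Fintype.card ι).choose j * (Fintype.card α - 1) ^ j) • f j := by
  calc ∑ y, f (hammingDist y x)
      = ∑ S : Finset ι, ∑ y : ι → α with ({i | y i ≠ x i} : Finset ι) = S,
          f (hammingDist y x) := (sum_fiberwise _ _ _).symm
    _ = ∑ S : Finset ι, (Fintype.card α - 1) ^ #S • f #S := by
        refine sum_congr rfl fun S _ => ?_
        rw [← card_filter_filter_ne_eq x S, ← sum_const]
        exact sum_congr rfl fun y hy => by rw [← (mem_filter_univ y).mp hy, hammingDist]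
    _ = _ := by
        simp only [← powerset_univ, mul_smul,
          sum_powerset_apply_card fun j => (Fintype.card α - 1) ^ j • f j, card_univ]

end HammingSphere

section Threshold

variable {G : Type*} [AddCommGroup G] [Lattice G] [IsOrderedAddMonoid G]

theorem sum_le_sum_posPart_sub_add_card_nsmul {β : Type*} [Fintype β] (s : Finset β) (f : β → G)
    (τ : G) : ∑ y ∈ s, f y ≤ ∑ y, (f y - τ)⁺ + #s • τ := by
  rw [← sub_le_iff_le_add, ← sum_const, ← sum_sub_distrib]
  calc ∑ y ∈ s, (f y - τ) ≤ ∑ y ∈ s, (f y - τ)⁺ := sum_le_sum fun y _ => le_posPart _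
    _ ≤ ∑ y, (f y - τ)⁺ := sum_le_univ_sum_of_nonneg fun y => posPart_nonneg _

variable {ι α : Type*} [Fintype ι] [DecidableEq ι] [Fintype α] [DecidableEq α]
  {c : ℕ → G} {t : ℕ}

theorem sum_posPart_apply_hammingDist_sub
    (hc : AntitoneOn c (Set.Iic (Fintype.card ι))) (ht : t ≤ Fintype.card ι) (x : ι → α) :
    ∑ y, (c (hammingDist y x) - c t)⁺
      = ∑ j ∈ range t,
          ((Fintype.card ι).choose j * (Fintype.card α - 1) ^ j) • (c j - c t) := by
  rw [sum_apply_hammingDist x fun j => (c j - c t)⁺,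
    ← sum_subset (range_subset_range.mpr (ht.trans (Nat.le_succ _)))]
  · refine sum_congr rfl fun j hj => ?_
    have hjt : j ≤ t := (mem_range.mp hj).le
    rw [posPart_of_nonneg (sub_nonneg.mpr (hc (hjt.trans ht) ht hjt))]
  · intro j hj hjt
    have hjn : j ≤ Fintype.card ι := mem_range_succ_iff.mp hj
    have htj : t ≤ j := not_lt.mp (mem_range.not.mp hjt)
    rw [posPart_of_nonpos (sub_nonpos.mpr (hc ht hjn htj)), smul_zero]

theorem sum_decodingRegion_apply_hammingDist_le {κ : Type*} [Fintype κ] [DecidableEq κ]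
    (hc : AntitoneOn c (Set.Iic (Fintype.card ι))) (ht : t ≤ Fintype.card ι)
    (x : κ → ι → α) (g : (ι → α) → κ) :
    ∑ m, ∑ y with g y = m, c (hammingDist y (x m))
      ≤ Fintype.card κ • ∑ j ∈ range t,
            ((Fintype.card ι).choose j * (Fintype.card α - 1) ^ j) • (c j - c t)
          + Fintype.card α ^ Fintype.card ι • c t := by
  have sum_card_region : ∑ m, #{y | g y = m} = Fintype.card α ^ Fintype.card ι := by
    rw [← card_eq_sum_card_fiberwise fun _ _ => mem_coe.mpr (mem_univ _), card_univ,
      Fintype.card_fun]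
  calc ∑ m, ∑ y with g y = m, c (hammingDist y (x m))
      ≤ ∑ m, (∑ y, (c (hammingDist y (x m)) - c t)⁺ + #{y | g y = m} • c t) :=
        sum_le_sum fun m _ => sum_le_sum_posPart_sub_add_card_nsmul _ _ _
    _ = _ := by
        simp only [sum_posPart_apply_hammingDist_sub hc ht, sum_add_distrib, sum_const, card_univ,
          ← sum_smul, sum_card_region]

end Threshold

theorem antitoneOn_pow_mul_pow_sub {R : Type*} [Semiring R] [PartialOrder R] [IsOrderedRing R]
    {a b : R} (ha : 0 ≤ a) (hab : a ≤ b) (n : ℕ) :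
    AntitoneOn (fun j => a ^ j * b ^ (n - j)) (Set.Iic n) := by
  intro i _ j hj hij
  have hb : 0 ≤ b := ha.trans hab
  have hsub : n - i = (j - i) + (n - j) := by have := Set.mem_Iic.mp hj; omega
  calc a ^ j * b ^ (n - j) = a ^ i * (a ^ (j - i) * b ^ (n - j)) := by
        rw [← mul_assoc, ← pow_add, Nat.add_sub_cancel' hij]
    _ ≤ a ^ i * (b ^ (j - i) * b ^ (n - j)) := by gcongr
    _ = a ^ i * b ^ (n - i) := by rw [← pow_add, hsub]

theorem stmt13_general {ι α κ : Type*} [Fintype ι] [DecidableEq ι] [Fintype α] [DecidableEq α]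
    [Nonempty α] [Fintype κ] [DecidableEq κ] [Nonempty κ] {ε : ℝ} (hε0 : 0 ≤ ε)
    (hε1 : ε ≤ 1 / Fintype.card α) {t : ℕ} (ht : t ≤ Fintype.card ι)
    (x : κ → ι → α) (g : (ι → α) → κ) :
    (Fintype.card κ : ℝ)⁻¹ * ∑ m, ∑ y with g y = m,
        ε ^ hammingDist y (x m)
          * (1 - ((Fintype.card α : ℝ) - 1) * ε) ^ (Fintype.card ι - hammingDist y (x m))
      ≤ (∑ j ∈ range t, ((Fintype.card ι).choose j : ℝ) * ((Fintype.card α : ℝ) - 1) ^ j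
            * ε ^ j * (1 - ((Fintype.card α : ℝ) - 1) * ε) ^ (Fintype.card ι - j))
        + ((Fintype.card α : ℝ) ^ Fintype.card ι / Fintype.card κ
            - ∑ j ∈ range t, ((Fintype.card ι).choose j : ℝ) * ((Fintype.card α : ℝ) - 1) ^ j)
          * ε ^ t * (1 - ((Fintype.card α : ℝ) - 1) * ε) ^ (Fintype.card ι - t) := by
  set b : ℝ := 1 - ((Fintype.card α : ℝ) - 1) * ε with hb
  have hεb : ε ≤ b := by
    have hεα : ε * Fintype.card α ≤ 1 :=
      (le_div_iff₀ (Nat.cast_pos.mpr Fintype.card_pos)).mp hε1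
    rw [hb]
    linarith
  have hκ : (Fintype.card κ : ℝ) ≠ 0 := Nat.cast_ne_zero.mpr Fintype.card_ne_zero
  have total_le := sum_decodingRegion_apply_hammingDist_le
    (antitoneOn_pow_mul_pow_sub hε0 hεb (Fintype.card ι)) ht x g
  simp only [nsmul_eq_mul, Nat.cast_mul, Nat.cast_pow, Nat.cast_pred Fintype.card_pos, mul_sub,
    sum_sub_distrib, ← mul_assoc, ← sum_mul] at total_le
  refine (mul_le_mul_of_nonneg_left total_le (by positivity)).trans_eq ?_
  field_simp
  ring

/-- sphere-packing converse for the q-ary symmetric channel: for any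
`(n, M)` code and decoder over the memoryless `q`-ary symmetric channel with per-letter
crossover probability `ε ≤ 1/q`, the average success probability is at most
`Σ_{j<t*} C(n,j)(q−1)^j ε^j (1−(q−1)ε)^{n−j} + A_{t*} ε^{t*} (1−(q−1)ε)^{n−t*}`,
where `A_t = qⁿ/M − Σ_{j<t} C(n,j)(q−1)^j` and `t*` is the largest `t ≤ n` with `A_t ≥ 0`. -/
theorem stmt13 (q n M : ℕ) (hq : 2 ≤ q) (hn : 1 ≤ n) (hM : 1 ≤ M)
    (ε : ℝ) (hε0 : 0 ≤ ε) (hε1 : ε ≤ 1 / q)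
    (A : ℕ → ℝ)
    (hA : ∀ t, A t = (q : ℝ) ^ n / M -
      ∑ j ∈ Finset.range t, (n.choose j : ℝ) * ((q : ℝ) - 1) ^ j)
    (tstar : ℕ) (ht_le : tstar ≤ n) (ht_nonneg : 0 ≤ A tstar)
    (ht_max : ∀ t, t ≤ n → 0 ≤ A t → t ≤ tstar)
    (x : Fin M → (Fin n → Fin q)) (g : (Fin n → Fin q) → Fin M) :
    (M : ℝ)⁻¹ * ∑ m, ∑ y ∈ Finset.univ.filter (fun y => g y = m),
        ε ^ hammingDist y (x m) * (1 - ((q : ℝ) - 1) * ε) ^ (n - hammingDist y (x m))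
      ≤ (∑ j ∈ Finset.range tstar,
          (n.choose j : ℝ) * ((q : ℝ) - 1) ^ j * ε ^ j * (1 - ((q : ℝ) - 1) * ε) ^ (n - j))
        + A tstar * ε ^ tstar * (1 - ((q : ℝ) - 1) * ε) ^ (n - tstar) := by
  have : NeZero q := ⟨by omega⟩
  have : NeZero M := ⟨by omega⟩
  simpa [hA] using stmt13_general (ι := Fin n) hε0 (by simpa using hε1) (by simpa using ht_le) x g
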